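/- Let C be a finite quotienting Boolean algebra over a finite alphabet A, let α : A* → M be a C-compatible monoid morphism into a finite monoid, and let ρ : 2^{A*} → R be a rating map quasi-multiplicative for an endomorphism γ of (R,+). Let S be the least Pol(C)-saturated subset of M × R for α and ρ. Then the α-pointed Pol(C)-optimal ρ-imprint satisfies: P_{Pol(C)}[α, ρ] = ↓_R {(s, γ(r)) : (s,r) ∈ S}. -/

import Mathlib

open Set

namespace Paper

abbrev Lang (A : Type) := Set (List A)
abbrev LClass (A : Type) := Set (Set (List A))

variable {A R M : Type}

/-- A lattice of languages: contains `∅` and `A*`, closed under finite union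
and finite intersection. -/
def LangLattice (𝒞 : LClass A) : Prop :=
  (∅ : Lang A) ∈ 𝒞 ∧ (Set.univ : Lang A) ∈ 𝒞 ∧
    (∀ K L : Lang A, K ∈ 𝒞 → L ∈ 𝒞 → K ∪ L ∈ 𝒞) ∧
    (∀ K L : Lang A, K ∈ 𝒞 → L ∈ 𝒞 → K ∩ L ∈ 𝒞)

/-- A Boolean algebra of languages: a lattice closed under complement. -/
def LangBoolAlg (𝒞 : LClass A) : Prop :=
  LangLattice 𝒞 ∧ ∀ L : Lang A, L ∈ 𝒞 → Lᶜ ∈ 𝒞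

/-- A class is quotient-closed when it is closed under left and right quotients
by words. -/
def QuotientClosed (𝒞 : LClass A) : Prop :=
  ∀ L ∈ 𝒞, ∀ w : List A,
    {u : List A | w ++ u ∈ L} ∈ 𝒞 ∧ {u : List A | u ++ w ∈ L} ∈ 𝒞

/-- The canonical preorder `≤_𝒞` associated with a class `𝒞`. -/
def cle (𝒞 : LClass A) (w w' : List A) : Prop := ∀ L ∈ 𝒞, w ∈ L → w' ∈ L

/-- The canonical equivalence `∼_𝒞` associated with a class `𝒞`. -/
def ceq (𝒞 : LClass A) (w w' : List A) : Prop := ∀ L ∈ 𝒞, (w ∈ L ↔ w' ∈ L)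

/-- The `∼_𝒞`-class of the word `w`. -/
def cclass (𝒞 : LClass A) (w : List A) : Lang A := {v | ceq 𝒞 w v}

/-- `D` is a `∼_𝒞`-class. -/
def IsCClass (𝒞 : LClass A) (D : Lang A) : Prop := ∃ w : List A, D = cclass 𝒞 w

/-- Multiplication of `∼_𝒞`-classes (the class of the concatenation of
representatives). -/
def cmul (𝒞 : LClass A) (D E : Lang A) : Lang A :=
  {x | ∃ u ∈ D, ∃ v ∈ E, ceq 𝒞 (u ++ v) x}

/-- Language concatenation. -/
def cat (K L : Lang A) : Lang A := {w | ∃ u ∈ K, ∃ v ∈ L, u ++ v = w}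

/-- Marked concatenation `K a L`. -/
def mcat (K : Lang A) (a : A) (L : Lang A) : Lang A :=
  {w | ∃ u ∈ K, ∃ v ∈ L, u ++ a :: v = w}

/-- Boolean closure: the least Boolean algebra containing `𝒞`. -/
def BoolC (𝒞 : LClass A) : LClass A := ⋂₀ {𝒟 : LClass A | LangBoolAlg 𝒟 ∧ 𝒞 ⊆ 𝒟}

/-- Polynomial closure: the least class containing `𝒞` closed under union and
marked concatenation. -/
def PolC (𝒞 : LClass A) : LClass A :=
  ⋂₀ {𝒟 : LClass A | 𝒞 ⊆ 𝒟 ∧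
    (∀ K L : Lang A, K ∈ 𝒟 → L ∈ 𝒟 → K ∪ L ∈ 𝒟) ∧
    (∀ (K L : Lang A) (a : A), K ∈ 𝒟 → L ∈ 𝒟 → mcat K a L ∈ 𝒟)}

/-- A cover of `L`: a finite set of languages whose union includes `L`. -/
def IsCover (Ks : LClass A) (L : Lang A) : Prop := Ks.Finite ∧ L ⊆ ⋃₀ Ks

/-- A `𝒞`-cover of `L`: a cover all of whose members belong to `𝒞`. -/
def IsCCover (𝒞 Ks : LClass A) (L : Lang A) : Prop := IsCover Ks L ∧ Ks ⊆ 𝒞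

/-- `α : A* → M` is a monoid morphism. -/
def IsMonoidMorphism [Monoid M] (α : List A → M) : Prop :=
  α [] = 1 ∧ ∀ u v : List A, α (u ++ v) = α u * α v

/-- `α` recognizes `L`. -/
def Recognizes [Monoid M] (α : List A → M) (L : Lang A) : Prop :=
  ∃ F : Set M, L = α ⁻¹' F

/-- A language is regular when it is recognized by a monoid morphism into a
finite monoid. -/
def RegularLang (L : Lang A) : Prop :=
  ∃ (N : Type) (_ : Monoid N) (_ : Finite N) (α : List A → N),
    IsMonoidMorphism α ∧ Recognizes α L

/-- The canonical order on a rating set: `r ≤ s` iff `r + s = s`. -/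
def rle [Add R] (r s : R) : Prop := r + s = s

/-- A rating map: maps `∅` to `0` and commutes with binary union. -/
def IsRatingMap [AddCommMonoid R] (ρ : Lang A → R) : Prop :=
  ρ ∅ = 0 ∧ ∀ K L : Lang A, ρ (K ∪ L) = ρ K + ρ L

/-- A nice rating map: the value of any language is a finite sum of values of
its words. -/
def IsNice [AddCommMonoid R] (ρ : Lang A → R) : Prop :=
  ∀ K : Lang A, ∃ l : List (List A), (∀ w ∈ l, w ∈ K) ∧
    ρ K = (l.map fun w => ρ {w}).sum

/-- A multiplicative rating map: also a morphism for concatenation. -/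
def IsMultiplicative [Semiring R] (ρ : Lang A → R) : Prop :=
  ρ ({[]} : Lang A) = 1 ∧ ∀ K L : Lang A, ρ (cat K L) = ρ K * ρ L

/-- An endomorphism of the additive monoid `(R, +)`. -/
def IsAddEndo [AddCommMonoid R] (γ : R → R) : Prop :=
  γ 0 = 0 ∧ ∀ r s : R, γ (r + s) = γ r + γ s

/-- A quasi-multiplicative rating map for the endomorphism `γ`. -/
def IsQuasiMult [Semiring R] (ρ : Lang A → R) (γ : R → R) : Prop :=
  IsAddEndo γ ∧ (∀ q r s : R, γ (q * γ r * s) = γ (q * r * s)) ∧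
    ∀ K L : Lang A, ρ (cat K L) = γ (ρ K * ρ L)

/-- The `ρ`-imprint of a set of languages. -/
def imprint [Add R] (ρ : Lang A → R) (Ks : LClass A) : Set R :=
  {r | ∃ K ∈ Ks, rle r (ρ K)}

/-- The `𝒟`-optimal `ρ`-imprint on `L` (the imprint of any optimal `𝒟`-cover
of `L`, i.e. the intersection of the imprints of all `𝒟`-covers of `L`). -/
def optImprint [Add R] (𝒟 : LClass A) (ρ : Lang A → R) (L : Lang A) : Set R :=
  {r | ∀ Ks : LClass A, IsCCover 𝒟 Ks L → r ∈ imprint ρ Ks}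

/-- Downset operation on subsets of a rating set. -/
def dclos [Add R] (U : Set R) : Set R := {r | ∃ s ∈ U, rle r s}

/-- Pointwise multiplication of subsets of a rating set. -/
def smul [Mul R] (U V : Set R) : Set R := {x | ∃ u ∈ U, ∃ v ∈ V, u * v = x}

/-- `S ⊆ M × R` is `Pol(𝒞)`-saturated for the morphism `α` (with associated
`∼_𝒞`-class map `cls`) and the rating map `ρ`. -/
def PolSaturated [Semiring R] [Monoid M] (α : List A → M) (cls : M → Lang A)
    (ρ : Lang A → R) (S : Set (M × R)) : Prop :=
  (∀ w : List A, (α w, ρ {w}) ∈ S) ∧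
  (∀ (s : M) (r q : R), (s, q) ∈ S → rle r q → (s, r) ∈ S) ∧
  (∀ (s₁ s₂ : M) (r₁ r₂ : R),
    (s₁, r₁) ∈ S → (s₂, r₂) ∈ S → (s₁ * s₂, r₁ * r₂) ∈ S) ∧
  (∀ (e : M) (f : R), (e, f) ∈ S → e * e = e → f * f = f →
    (e, f * ρ (cls e) * f) ∈ S)


inductive Star {B : Type} (X : Set (List B)) : List B → Prop
  | nil : Star X []
  | snoc {w x : List B} : Star X w → x ∈ X → Star X (w ++ x)

def StarL {B : Type} (X : Set (List B)) : Set (List B) := {w | Star X w}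

inductive Path {B N : Type} [Monoid N] (φ : List B → N) (X : Set (List B)) (U : Set N) (p : N) :
    N → List B → Prop
  | single {x : List B} : x ∈ X → Path φ X U p (p * φ x) x
  | snoc {m : N} {w x : List B} : Path φ X U p m w → m ∈ U → x ∈ X →
      Path φ X U p (m * φ x) (w ++ x)

section Simon
variable {B N : Type} [Monoid N]

theorem Path.val {φ : List B → N} (hφ : IsMonoidMorphism φ) {X : Set (List B)} {U : Set N} {p q : N}
    {w : List B} (H : Submonoid N) (hX : ∀ x ∈ X, φ x ∈ H) (h : Path φ X U p q w) :
    q = p * φ w ∧ φ w ∈ H := by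
  induction h with
  | single hx => exact ⟨rfl, hX _ hx⟩
  | snoc _ _ hx ih =>
    rw [hφ.2]
    exact ⟨by rw [ih.1, mul_assoc], H.mul_mem ih.2 (hX _ hx)⟩

theorem Star.val {φ : List B → N} (hφ : IsMonoidMorphism φ) {X : Set (List B)}
    {w : List B} (H : Submonoid N) (hX : ∀ x ∈ X, φ x ∈ H) (h : Star X w) : φ w ∈ H := by
  induction h with
  | nil => rw [hφ.1]; exact H.one_mem
  | snoc _ hx ih => rw [hφ.2]; exact H.mul_mem ih (hX _ hx)

theorem Path.split {φ : List B → N} {X : Set (List B)} {U : Set N} {p q r : N}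
    {w : List B} (h : Path φ X (insert r U) p q w) :
    Path φ X U p q w ∨ w ∈ cat {w | Path φ X U p r w}
      (cat (StarL {w | Path φ X U r r w}) {w | Path φ X U r q w}) := by
  induction h with
  | single hx => exact Or.inl (.single hx)
  | @snoc m w x _ hm hx ih =>
    rcases ih with ih | ⟨a, ha, _, ⟨b, hb, c, hc, rfl⟩, rfl⟩
    · rcases hm with rfl | hm
      · exact Or.inr ⟨w, ih, x, ⟨[], .nil, x, .single hx, rfl⟩, rfl⟩
      · exact Or.inl (.snoc ih hm hx)
    · right
      rcases hm with rfl | hm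
      · exact ⟨a, ha, (b ++ c) ++ x, ⟨b ++ c, .snoc hb hc, x, .single hx, rfl⟩, by simp⟩
      · exact ⟨a, ha, b ++ (c ++ x), ⟨b, hb, c ++ x, .snoc hc hm hx, rfl⟩, by simp⟩

theorem G_biUnion {ι : Type} {G : Set (List B) → Prop} (mono : ∀ X Y, X ⊆ Y → G Y → G X)
    (hU : ∀ X Y, G X → G Y → G (X ∪ Y)) (hnil : G {[]}) (I : Set ι) (hI : I.Finite)
    (f : ι → Set (List B)) (h : ∀ i ∈ I, G (f i)) : G {w | ∃ i ∈ I, w ∈ f i} := by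
  induction I, hI using Set.Finite.induction_on with
  | empty => exact mono _ _ (by rintro w ⟨i, hi, _⟩; exact hi.elim) hnil
  | @insert a s _ _ ih =>
    refine mono _ _ ?_ (hU _ _ (h a (mem_insert _ _)) (ih fun i hi => h i (mem_insert_of_mem _ hi)))
    rintro w ⟨i, rfl | hi, hw⟩
    · exact Or.inl hw
    · exact Or.inr ⟨i, hi, hw⟩

theorem Star.split {X Y : Set (List B)} {w : List B} (h : Star (X ∪ Y) w) :
    w ∈ cat (StarL Y) (StarL (cat X (StarL Y))) := by
  induction h with
  | nil => exact ⟨[], .nil, [], .nil, rfl⟩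
  | @snoc w x _ hx ih =>
    obtain ⟨u, hu, v, hv, rfl⟩ := ih
    rcases hx with hx | hx
    · exact ⟨u, hu, v ++ x, .snoc hv ⟨x, hx, [], .nil, by simp⟩, by simp⟩
    · cases hv with
      | nil => exact ⟨u ++ x, .snoc hu hx, [], .nil, by simp⟩
      | @snoc v y hv hy =>
        obtain ⟨b, hb, t, ht, rfl⟩ := hy
        exact ⟨u, hu, v ++ (b ++ (t ++ x)), .snoc hv ⟨b, hb, t ++ x, .snoc ht hx, rfl⟩, by simp⟩

theorem simon [Finite N] (φ : List B → N) (hφ : IsMonoidMorphism φ) (G : Set (List B) → Prop)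
    (mono : ∀ X Y, X ⊆ Y → G Y → G X) (hU : ∀ X Y, G X → G Y → G (X ∪ Y))
    (hcat : ∀ X Y, G X → G Y → G (cat X Y)) (hnil : G {[]})
    (hstar : ∀ (e : N) X, e * e = e → G X → (∀ w ∈ X, φ w = e) → G (StarL X)) :
    ∀ (H : Submonoid N) X, (∀ x ∈ X, φ x ∈ H) → G X → G (StarL X) := by
  intro H
  induction H using WellFoundedLT.induction with
  | ind H IH =>
  intro X hX hG
  have hpath : ∀ U : Set N, (∀ r ∈ U, ∃ n ∈ H, r * n ≠ r) → ∀ p q, G {w | Path φ X U p q w} := by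
    intro U
    induction U, U.toFinite using Set.Finite.induction_on with
    | empty =>
      intro _ p q
      refine mono _ _ ?_ hG
      rintro w hw
      cases hw with
      | single hx => exact hx
      | snoc _ hm _ => exact hm.elim
    | @insert r U _ _ ih =>
      intro hr p q
      have ih' := ih fun i hi => hr i (mem_insert_of_mem _ hi)
      refine mono _ (_ ∪ cat _ (cat _ _)) (fun w hw => Path.split hw)
        (hU _ _ (ih' p q) (hcat _ _ (ih' p r) (hcat _ _ ?_ (ih' r q))))
      let H' : Submonoid N :=
        { carrier := {n | n ∈ H ∧ r * n = r}
          one_mem' := ⟨H.one_mem, mul_one r⟩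
          mul_mem' := by
            rintro a b ⟨ha, ha'⟩ ⟨hb, hb'⟩
            exact ⟨H.mul_mem ha hb, by rw [← mul_assoc, ha', hb']⟩ }
      refine IH H' ?_ _ ?_ (ih' r r)
      · obtain ⟨n, hn, hrn⟩ := hr r (mem_insert _ _)
        refine lt_of_le_of_ne (fun x hx => hx.1) fun h => hrn ?_
        have : n ∈ H' := h ▸ hn
        exact this.2
      · intro x hx
        have := Path.val hφ H hX hx
        exact ⟨this.2, this.1.symm⟩
  set U : Set N := {r | ∃ n ∈ H, r * n ≠ r} with hUdef
  have hp := hpath U (fun r hr => hr)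
  have hY : G {w | ∃ q ∈ (univ : Set N), w ∈ {w | Path φ X U 1 q w}} :=
    G_biUnion mono hU hnil _ (toFinite _) _ (fun q _ => hp 1 q)
  have hZ : ∀ Z : Set N, (∀ z ∈ Z, z ∈ H ∧ z ∉ U) →
      G (StarL {w | ∃ q ∈ Z, w ∈ {w | Path φ X U 1 q w}}) := by
    intro Z
    induction Z, Z.toFinite using Set.Finite.induction_on with
    | empty =>
      intro _
      refine mono _ _ ?_ hnil
      intro w hw
      cases hw with
      | nil => rfl
      | snoc _ hx => obtain ⟨_, h, _⟩ := hx; exact h.elim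
    | @insert z Z _ _ ih =>
      intro hz
      have ih' := ih fun i hi => hz i (mem_insert_of_mem _ hi)
      have hz1 := hz z (mem_insert _ _)
      have hz2 : ∀ n ∈ H, z * n = z := by
        intro n hn
        by_contra hne
        exact hz1.2 ⟨n, hn, hne⟩
      refine mono _ (cat _ (StarL (cat {w | Path φ X U 1 z w} _))) (fun w hw => Star.split ?_)
        (hcat _ _ ih' (hstar z _ (hz2 z hz1.1) (hcat _ _ (hp 1 z) ih') ?_))
      · have e : {w | ∃ q ∈ insert z Z, w ∈ {w | Path φ X U 1 q w}} =
            {w | Path φ X U 1 z w} ∪ {w | ∃ q ∈ Z, w ∈ {w | Path φ X U 1 q w}} := by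
          ext v
          simp
        rw [e] at hw
        exact hw
      · rintro _ ⟨u, hu, v, hv, rfl⟩
        have h1 := Path.val hφ H hX hu
        have h2 : φ v ∈ H := Star.val hφ H (by
          rintro x ⟨q, _, hx⟩
          exact (Path.val hφ H hX hx).2) hv
        rw [hφ.2, ← one_mul (φ u), ← h1.1, hz2 _ h2]
  have hZ' := hZ {z | z ∈ H ∧ z ∉ U} (fun z hz => hz)
  refine mono _ _ ?_ (hcat _ _ hZ' (hU _ _ hnil hY))
  intro w hw
  induction hw with
  | nil => exact ⟨[], .nil, [], Or.inl rfl, rfl⟩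
  | @snoc w x _ hx ih =>
    obtain ⟨u, hu, v, hv, rfl⟩ := ih
    rcases hv with hv | ⟨q, _, hv⟩
    · refine ⟨u, hu, x, Or.inr ⟨_, mem_univ _, .single hx⟩, ?_⟩
      have : v = [] := hv
      simp [this]
    · by_cases hq : q ∈ U
      · exact ⟨u, hu, v ++ x, Or.inr ⟨_, mem_univ _, .snoc hv hq hx⟩, by simp⟩
      · have h1 := Path.val hφ H hX hv
        refine ⟨u ++ v, .snoc hu ⟨q, ⟨?_, hq⟩, hv⟩, x, Or.inr ⟨_, mem_univ _, .single hx⟩, by simp⟩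
        rw [h1.1, one_mul]; exact h1.2

end Simon

/-- long lists contain a short idempotent factor -/
def Fac {B N : Type} [Monoid N] (φ : List B → N) (n : ℕ) (w : List B) : Prop :=
  ∃ u b v, w = u ++ b ++ v ∧ b ≠ [] ∧ b.length ≤ n ∧ φ b * φ b = φ b

theorem exists_fac {B N : Type} [Monoid N] [Finite N] (φ : List B → N) (hφ : IsMonoidMorphism φ) :
    ∃ n : ℕ, ∀ w : List B, n ≤ w.length → Fac φ n w := by
  have key := simon φ hφ (fun X => ∃ n : ℕ, ∀ w ∈ X, n ≤ w.length → Fac φ n w) ?_ ?_ ?_ ?_ ?_ ⊤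
    {w | w.length = 1} (fun _ _ => Submonoid.mem_top _) ⟨2, fun w hw h => by
      have : w.length = 1 := hw
      omega⟩
  · obtain ⟨n, hn⟩ := key
    refine ⟨n, fun w => hn w ?_⟩
    induction w using List.reverseRecOn with
    | nil => exact .nil
    | append_singleton w a ih => exact .snoc ih rfl
  · rintro X Y h ⟨n, hn⟩
    exact ⟨n, fun w hw => hn w (h hw)⟩
  · rintro X Y ⟨n, hn⟩ ⟨m, hm⟩
    refine ⟨n + m, ?_⟩
    rintro w (hw | hw) hl
    · obtain ⟨u, b, v, h1, h2, h3, h4⟩ := hn w hw (by omega)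
      exact ⟨u, b, v, h1, h2, by omega, h4⟩
    · obtain ⟨u, b, v, h1, h2, h3, h4⟩ := hm w hw (by omega)
      exact ⟨u, b, v, h1, h2, by omega, h4⟩
  · rintro X Y ⟨n, hn⟩ ⟨m, hm⟩
    refine ⟨n + m, ?_⟩
    rintro _ ⟨x, hx, y, hy, rfl⟩ hl
    rw [List.length_append] at hl
    by_cases h : n ≤ x.length
    · obtain ⟨u, b, v, h1, h2, h3, h4⟩ := hn x hx h
      exact ⟨u, b, v ++ y, by simp [h1], h2, by omega, h4⟩
    · obtain ⟨u, b, v, h1, h2, h3, h4⟩ := hm y hy (by omega)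
      exact ⟨x ++ u, b, v, by simp [h1], h2, by omega, h4⟩
  · exact ⟨1, fun w hw h => by
      have : w = [] := hw
      simp [this] at h⟩
  · rintro e X he ⟨n, hn⟩ hX
    refine ⟨n + 1, fun w hw hl => ?_⟩
    have : ∀ w, Star X w → w ≠ [] → Fac φ (n+1) w := by
      intro w hw
      induction hw with
      | nil => intro h; exact absurd rfl h
      | @snoc w x hw hx ih =>
        intro hne
        by_cases hx0 : x = []
        · subst hx0
          simp at hne ⊢
          exact ih hne
        · by_cases hxl : n ≤ x.length
          · obtain ⟨u, b, v, h1, h2, h3, h4⟩ := hn x hx hxl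
            exact ⟨w ++ u, b, v, by simp [h1], h2, by omega, h4⟩
          · exact ⟨w, x, [], by simp, hx0, by omega, by rw [hX x hx, he]⟩
    refine this w hw ?_
    rintro rfl
    simp at hl

section Order
variable {R : Type} [Semiring R]

theorem rle_rfl (hidem : ∀ r : R, r + r = r) (r : R) : rle r r := hidem r

theorem rle_trans {a b c : R} (h : rle a b) (h' : rle b c) : rle a c := by
  unfold rle at *
  rw [← h', ← add_assoc, h]

theorem rle_mul (hidem : ∀ r : R, r + r = r) {a b c d : R} (h : rle a b) (h' : rle c d) :
    rle (a * c) (b * d) := by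
  unfold rle at *
  have e : b * d = a * c + (a * d + b * c + b * d) := by
    conv_lhs => rw [← h, ← h']
    simp only [add_mul, mul_add]
    abel
  rw [e, ← add_assoc, hidem]

theorem rle_gam {γ : R → R} (hγ : IsAddEndo γ) {a b : R} (h : rle a b) : rle (γ a) (γ b) := by
  unfold rle at *
  rw [← hγ.2, h]

theorem rho_mono {ρ : Lang A → R} (hρ : IsRatingMap ρ) {K L : Lang A} (h : K ⊆ L) :
    rle (ρ K) (ρ L) := by
  unfold rle
  rw [← hρ.2, union_eq_self_of_subset_left h]

variable {ρ : Lang A → R} {γ : R → R}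

theorem gam_gam (hγ : IsQuasiMult ρ γ) (r : R) : γ (γ r) = γ r := by
  simpa using hγ.2.1 1 r 1

theorem gam_l (hγ : IsQuasiMult ρ γ) (r s : R) : γ (γ r * s) = γ (r * s) := by
  simpa using hγ.2.1 1 r s

theorem gam_r (hγ : IsQuasiMult ρ γ) (r s : R) : γ (r * γ s) = γ (r * s) := by
  simpa using hγ.2.1 r s 1

theorem gam_rho (hγ : IsQuasiMult ρ γ) (K : Lang A) : γ (ρ K) = ρ K := by
  have : cat {[]} K = K := by
    ext w
    simp [cat]
  rw [← this, hγ.2.2, gam_gam hγ]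

/-- product step for values -/
theorem val_cat (hidem : ∀ r : R, r + r = r) (hγ : IsQuasiMult ρ γ) {K L : Lang A} {a b : R}
    (h : rle (ρ K) (γ a)) (h' : rle (ρ L) (γ b)) : rle (ρ (cat K L)) (γ (a * b)) := by
  rw [hγ.2.2, ← gam_l hγ a, ← gam_r hγ _ b]
  exact rle_gam hγ.1 (rle_mul hidem h h')

theorem val_cat' (hidem : ∀ r : R, r + r = r) (hγ : IsQuasiMult ρ γ) {K L : Lang A} {a b : R}
    (h : rle (γ a) (ρ K)) (h' : rle (γ b) (ρ L)) : rle (γ (a * b)) (ρ (cat K L)) := by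
  rw [hγ.2.2, ← gam_l hγ a, ← gam_r hγ _ b]
  exact rle_gam hγ.1 (rle_mul hidem h h')

end Order

theorem ceq_app {𝒞 : LClass A} (hqc : QuotientClosed 𝒞) {u u' v v' : List A}
    (h : ceq 𝒞 u u') (h' : ceq 𝒞 v v') : ceq 𝒞 (u ++ v) (u' ++ v') := by
  intro L hL
  exact (h _ (hqc L hL v).2).trans (h' _ (hqc L hL u').1)

theorem ceq_rfl {𝒞 : LClass A} (u : List A) : ceq 𝒞 u u := fun _ _ => Iff.rfl

theorem ceq_symm {𝒞 : LClass A} {u v : List A} (h : ceq 𝒞 u v) : ceq 𝒞 v u :=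
  fun L hL => (h L hL).symm

theorem ceq_trans {𝒞 : LClass A} {u v w : List A} (h : ceq 𝒞 u v) (h' : ceq 𝒞 v w) :
    ceq 𝒞 u w := fun L hL => (h L hL).trans (h' L hL)

/-- stratified preorder -/
def ple (𝒞 : LClass A) : ℕ → List A → List A → Prop
  | 0, w, w' => ceq 𝒞 w w'
  | k + 1, w, w' => ple 𝒞 k w w' ∧ ∀ u a v, w = u ++ a :: v →
      ∃ u' v', w' = u' ++ a :: v' ∧ ple 𝒞 k u u' ∧ ple 𝒞 k v v'

theorem ple_rfl {𝒞 : LClass A} (k : ℕ) : ∀ w, ple 𝒞 k w w := by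
  induction k with
  | zero => exact ceq_rfl
  | succ k ih => exact fun w => ⟨ih w, fun u a v h => ⟨u, v, h, ih u, ih v⟩⟩

theorem ple_trans {𝒞 : LClass A} (k : ℕ) : ∀ {u v w : List A},
    ple 𝒞 k u v → ple 𝒞 k v w → ple 𝒞 k u w := by
  induction k with
  | zero => exact fun h h' => ceq_trans h h'
  | succ k ih =>
    intro u v w h h'
    refine ⟨ih h.1 h'.1, fun x a y hxy => ?_⟩
    obtain ⟨x', y', e, h1, h2⟩ := h.2 x a y hxy
    obtain ⟨x2, y2, e2, h3, h4⟩ := h'.2 x' a y' e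
    exact ⟨x2, y2, e2, ih h1 h3, ih h2 h4⟩

theorem ple_mono {𝒞 : LClass A} {k l : ℕ} (h : k ≤ l) {w w' : List A} (hl : ple 𝒞 l w w') :
    ple 𝒞 k w w' := by
  induction h with
  | refl => exact hl
  | step _ ih => exact ih hl.1

theorem ple_app {𝒞 : LClass A} (hqc : QuotientClosed 𝒞) (k : ℕ) : ∀ {u u' v v' : List A},
    ple 𝒞 k u u' → ple 𝒞 k v v' → ple 𝒞 k (u ++ v) (u' ++ v') := by
  induction k with
  | zero => exact fun h h' => ceq_app hqc h h'
  | succ k ih =>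
    intro u u' v v' h h'
    refine ⟨ih h.1 h'.1, ?_⟩
    intro x a y hxy
    rcases List.append_eq_append_iff.1 hxy with ⟨c, rfl, hc⟩ | ⟨c, hc, hc'⟩
    · obtain ⟨c', y', rfl, h1, h2⟩ := h'.2 c a y hc
      exact ⟨u' ++ c', y', by simp, ih h.1 h1, h2⟩
    · cases c with
      | nil =>
        obtain ⟨c', y', rfl, h1, h2⟩ := h'.2 [] a y (by simpa using hc'.symm)
        refine ⟨u' ++ c', y', by simp, ?_, h2⟩
        have := ih h.1 h1
        simpa [hc] using this
      | cons b c =>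
        simp at hc'
        obtain ⟨rfl, rfl⟩ := hc'
        obtain ⟨x', c', rfl, h1, h2⟩ := h.2 x a c hc
        exact ⟨x', c' ++ v', by simp, h1, ih h2 h'.1⟩

def rep (w : List A) : ℕ → List A
  | 0 => []
  | n + 1 => w ++ rep w n

theorem rep_add (w : List A) (m n : ℕ) : rep w (m + n) = rep w m ++ rep w n := by
  induction m with
  | zero => simp [rep]
  | succ m ih => rw [Nat.succ_add]; simp [rep, ih]

theorem rep_ceq {𝒞 : LClass A} (hqc : QuotientClosed 𝒞) {w : List A} (hw : ceq 𝒞 (w ++ w) w)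
    (n : ℕ) : ceq 𝒞 (rep w (n + 1)) w := by
  induction n with
  | zero => simp [rep]; exact ceq_rfl _
  | succ n ih => exact ceq_trans (ceq_app hqc (ceq_rfl w) ih) hw

theorem rep_fac {w : List A} : ∀ {n : ℕ} {u v : List A} {a : A}, rep w n = u ++ a :: v →
    ∃ i j x y, i + 1 + j = n ∧ w = x ++ a :: y ∧ u = rep w i ++ x ∧ v = y ++ rep w j := by
  intro n
  induction n with
  | zero => intro u v a h; simp [rep] at h
  | succ n ih =>
    intro u v a h
    rcases List.append_eq_append_iff.1 (show w ++ rep w n = u ++ a :: v from h) with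
      ⟨c, hu, hc⟩ | ⟨c, hc, hc'⟩
    · obtain ⟨i, j, x, y, h1, h2, h3, h4⟩ := ih hc
      exact ⟨i + 1, j, x, y, by omega, h2, by rw [hu, h3]; simp [rep], h4⟩
    · cases c with
      | nil =>
        obtain ⟨i, j, x, y, h1, h2, h3, h4⟩ := ih (u := []) (v := v) (a := a) (by simpa using hc'.symm)
        refine ⟨i + 1, j, x, y, by omega, h2, ?_, h4⟩
        simp at hc
        simp only [rep, List.append_assoc, ← h3]; simp [hc]
      | cons b c =>
        simp at hc'
        obtain ⟨rfl, rfl⟩ := hc'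
        exact ⟨0, n, u, c, by omega, hc, by simp [rep], rfl⟩

def bnd : ℕ → ℕ
  | 0 => 1
  | k + 1 => 2 * bnd k + 1

theorem bnd_pos (k : ℕ) : 1 ≤ bnd k := by cases k <;> simp [bnd]

theorem ple_pump {𝒞 : LClass A} (hqc : QuotientClosed 𝒞) {w : List A} (hw : ceq 𝒞 (w ++ w) w)
    (k : ℕ) : ∀ n, bnd k ≤ n → ∀ z, ceq 𝒞 z w → ple 𝒞 k (rep w n) (rep w n ++ z ++ rep w n) := by
  have hr : ∀ n, 1 ≤ n → ceq 𝒞 (rep w n) w := by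
    intro n hn
    obtain ⟨m, rfl⟩ := Nat.exists_eq_add_of_le' hn
    exact rep_ceq hqc hw m
  induction k with
  | zero =>
    intro n hn z hz
    have h1 := hr n hn
    exact ceq_trans h1 (ceq_symm (ceq_trans (ceq_app hqc (ceq_trans (ceq_app hqc h1 hz) hw) h1) hw))
  | succ k ih =>
    intro n hn z hz
    have hb := bnd_pos k
    simp only [bnd] at hn
    refine ⟨ih n (by omega) z hz, ?_⟩
    intro u a v huv
    obtain ⟨i, j, x, y, h1, h2, rfl, rfl⟩ := rep_fac huv
    by_cases hj : bnd k ≤ j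
    · refine ⟨rep w i ++ x, y ++ (rep w j ++ z ++ rep w n), ?_, ple_rfl k _, ?_⟩
      · rw [huv]; simp
      · refine ple_app hqc k (ple_rfl k _) ?_
        have := ih j hj (z ++ rep w (i + 1))
          (ceq_trans (ceq_app hqc hz (hr _ (by omega))) hw)
        rw [← h1, rep_add w (i + 1) j]
        simpa using this
    · refine ⟨rep w n ++ z ++ rep w i ++ x, y ++ rep w j, ?_, ?_, ple_rfl k _⟩
      · conv_lhs => rw [List.append_assoc, huv]
        rw [huv]; simp
      · refine ple_app hqc k ?_ (ple_rfl k _)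
        have := ih i (by omega) (rep w (1 + j) ++ z)
          (ceq_trans (ceq_app hqc (hr _ (by omega)) hz) hw)
        rw [← h1, add_assoc, rep_add w i (1 + j)]
        simpa using this

theorem pol_up {𝒞 : LClass A} {K : Lang A} (hK : K ∈ PolC 𝒞) :
    ∃ k, ∀ w ∈ K, ∀ w', ple 𝒞 k w w' → w' ∈ K := by
  refine hK {K | ∃ k, ∀ w ∈ K, ∀ w', ple 𝒞 k w w' → w' ∈ K} ⟨?_, ?_, ?_⟩
  · exact fun L hL => ⟨0, fun w hw w' h => (h L hL).1 hw⟩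
  · rintro K L ⟨k, hk⟩ ⟨l, hl⟩
    refine ⟨max k l, ?_⟩
    rintro w (hw | hw) w' h
    · exact Or.inl (hk w hw w' (ple_mono (le_max_left _ _) h))
    · exact Or.inr (hl w hw w' (ple_mono (le_max_right _ _) h))
  · rintro K L a ⟨k, hk⟩ ⟨l, hl⟩
    refine ⟨max k l + 1, ?_⟩
    rintro _ ⟨u, hu, v, hv, rfl⟩ w' h
    obtain ⟨u', v', rfl, h1, h2⟩ := h.2 u a v rfl
    exact ⟨u', hk u hu u' (ple_mono (le_max_left _ _) h1), v',
      hl v hv v' (ple_mono (le_max_right _ _) h2), rfl⟩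

theorem sound {A R M : Type} [Semiring R]
    [Monoid M] (hidem : ∀ r : R, r + r = r)
    (𝒞 : LClass A) (hqc : QuotientClosed 𝒞)
    (α : List A → M) (hα : IsMonoidMorphism α)
    (cls : M → Lang A)
    (hcls : ∀ s : M, IsCClass 𝒞 (cls s) ∧ α ⁻¹' {s} ⊆ cls s)
    (ρ : Lang A → R) (hρ : IsRatingMap ρ) (γ : R → R) (hγ : IsQuasiMult ρ γ) (k : ℕ) :
    PolSaturated α cls ρ {p | ∃ w, α w = p.1 ∧ rle (γ p.2) (ρ {w' | ple 𝒞 k w w'})} := by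
  have hprod : ∀ (w₁ w₂ : List A) (r₁ r₂ : R), rle (γ r₁) (ρ {w' | ple 𝒞 k w₁ w'}) →
      rle (γ r₂) (ρ {w' | ple 𝒞 k w₂ w'}) →
      rle (γ (r₁ * r₂)) (ρ {w' | ple 𝒞 k (w₁ ++ w₂) w'}) := by
    intro w₁ w₂ r₁ r₂ h1 h2
    refine rle_trans (val_cat' hidem hγ h1 h2) (rho_mono hρ ?_)
    rintro _ ⟨u, hu, v, hv, rfl⟩
    exact ple_app hqc k hu hv
  refine ⟨?_, ?_, ?_, ?_⟩
  · intro w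
    refine ⟨w, rfl, ?_⟩
    simp only [gam_rho hγ]
    refine rho_mono hρ ?_
    rintro _ rfl
    exact ple_rfl k _
  · rintro s r q ⟨w, hw, h⟩ hrq
    exact ⟨w, hw, rle_trans (rle_gam hγ.1 hrq) h⟩
  · rintro s₁ s₂ r₁ r₂ ⟨w₁, hw₁, h₁⟩ ⟨w₂, hw₂, h₂⟩
    refine ⟨w₁ ++ w₂, ?_, hprod _ _ _ _ h₁ h₂⟩
    rw [hα.2, hw₁, hw₂]
  · rintro e f ⟨w, hw, h⟩ he hf
    simp only at hw h
    obtain ⟨w0, hw0⟩ := (hcls e).1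
    have hcl : ∀ z, z ∈ cls e → ceq 𝒞 z w := by
      intro z hz
      have h1 : w ∈ cls e := (hcls e).2 hw
      rw [hw0] at h1 hz
      exact ceq_trans (ceq_symm hz) h1
    have hww : ceq 𝒞 (w ++ w) w := by
      refine hcl _ ((hcls e).2 ?_)
      change α (w ++ w) = e
      rw [hα.2, hw, he]
    have hrep : ∀ n, α (rep w (n + 1)) = e ∧
        rle (γ f) (ρ {w' | ple 𝒞 k (rep w (n + 1)) w'}) := by
      intro n
      induction n with
      | zero => simpa [rep] using ⟨hw, h⟩
      | succ n ih =>
        refine ⟨?_, ?_⟩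
        · rw [rep, hα.2, ih.1, hw, he]
        · rw [← hf]
          exact hprod _ _ _ _ h ih.2
    obtain ⟨n, hn⟩ := Nat.exists_eq_add_of_le' (bnd_pos k)
    obtain ⟨h1, h2⟩ := hrep n
    rw [← hn] at h1 h2
    refine ⟨rep w (bnd k), h1, ?_⟩
    have h3 : rle (γ (ρ (cls e))) (ρ (cls e)) := by
      rw [gam_rho hγ]; exact rle_rfl hidem _
    refine rle_trans (val_cat' hidem hγ (val_cat' hidem hγ h2 h3) h2) (rho_mono hρ ?_)
    rintro _ ⟨_, ⟨x, hx, z, hz, rfl⟩, y, hy, rfl⟩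
    exact ple_trans k (ple_pump hqc hww k _ le_rfl z (hcl z hz))
      (ple_app hqc k (ple_app hqc k hx (ple_rfl k z)) hy)

theorem pol_base {𝒞 : LClass A} {K : Lang A} (h : K ∈ 𝒞) : K ∈ PolC 𝒞 :=
  fun _ hD => hD.1 h

theorem pol_union {𝒞 : LClass A} {K L : Lang A} (h : K ∈ PolC 𝒞) (h' : L ∈ PolC 𝒞) :
    K ∪ L ∈ PolC 𝒞 := fun D hD => hD.2.1 K L (h D hD) (h' D hD)

theorem pol_mcat {𝒞 : LClass A} {K L : Lang A} (a : A) (h : K ∈ PolC 𝒞) (h' : L ∈ PolC 𝒞) :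
    mcat K a L ∈ PolC 𝒞 := fun D hD => hD.2.2 K L a (h D hD) (h' D hD)

theorem pol_lq {𝒞 : LClass A} (hba : LangBoolAlg 𝒞) (hqc : QuotientClosed 𝒞) {K : Lang A}
    (hK : K ∈ PolC 𝒞) : ∀ a, {w | a :: w ∈ K} ∈ PolC 𝒞 := by
  have := hK {K | K ∈ PolC 𝒞 ∧ ∀ a, {w | a :: w ∈ K} ∈ PolC 𝒞} ⟨?_, ?_, ?_⟩
  · exact this.2
  · exact fun L hL => ⟨pol_base hL, fun a => pol_base (hqc L hL [a]).1⟩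
  · rintro K L ⟨h1, h2⟩ ⟨h3, h4⟩
    exact ⟨pol_union h1 h3, fun a => pol_union (h2 a) (h4 a)⟩
  · rintro K L b ⟨h1, h2⟩ ⟨h3, h4⟩
    refine ⟨pol_mcat b h1 h3, fun a => ?_⟩
    have e : {w | a :: w ∈ mcat K b L} =
        mcat {w | a :: w ∈ K} b L ∪ {w | ([] ∈ K ∧ a = b) ∧ w ∈ L} := by
      ext w
      constructor
      · rintro ⟨u, hu, v, hv, h⟩
        cases u with
        | nil =>
          simp at h
          obtain ⟨rfl, rfl⟩ := h
          exact Or.inr ⟨⟨hu, rfl⟩, hv⟩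
        | cons c u =>
          simp at h
          obtain ⟨rfl, rfl⟩ := h
          exact Or.inl ⟨u, hu, v, hv, rfl⟩
      · rintro (⟨u, hu, v, hv, rfl⟩ | ⟨⟨h, rfl⟩, hw⟩)
        · exact ⟨a :: u, hu, v, hv, rfl⟩
        · exact ⟨[], h, w, hw, rfl⟩
    rw [e]
    refine pol_union (pol_mcat b (h2 a) h3) ?_
    by_cases hc : [] ∈ K ∧ a = b
    · simpa [hc] using h3
    · have : {w | ([] ∈ K ∧ a = b) ∧ w ∈ L} = ∅ := by
        ext w; simp only [mem_ofPred_eq, hc, false_and]; rfl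
      rw [this]
      exact pol_base hba.1.1

theorem pol_biUnion {𝒞 : LClass A} (hba : LangBoolAlg 𝒞) {ι : Type} (I : Set ι) (hI : I.Finite)
    (f : ι → Lang A) (h : ∀ i, f i ∈ PolC 𝒞) : {w | ∃ i ∈ I, w ∈ f i} ∈ PolC 𝒞 := by
  induction I, hI using Set.Finite.induction_on with
  | empty => simpa using pol_base hba.1.1
  | @insert a s _ _ ih =>
    have : {w | ∃ i ∈ insert a s, w ∈ f i} = f a ∪ {w | ∃ i ∈ s, w ∈ f i} := by
      ext w; simp
    rw [this]
    exact pol_union (h a) ih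

theorem pol_cat [Finite A] {𝒞 : LClass A} (hba : LangBoolAlg 𝒞) (hqc : QuotientClosed 𝒞)
    {K L : Lang A} (hK : K ∈ PolC 𝒞) (hL : L ∈ PolC 𝒞) : cat K L ∈ PolC 𝒞 := by
  have e : cat K L = {w | [] ∈ L ∧ w ∈ K} ∪
      {w | ∃ a ∈ (univ : Set A), w ∈ mcat K a {w | a :: w ∈ L}} := by
    ext w
    constructor
    · rintro ⟨u, hu, v, hv, rfl⟩
      cases v with
      | nil => exact Or.inl ⟨hv, by simpa using hu⟩
      | cons a v => exact Or.inr ⟨a, mem_univ _, u, hu, v, hv, rfl⟩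
    · rintro (⟨h, hw⟩ | ⟨a, _, u, hu, v, hv, rfl⟩)
      · exact ⟨w, hw, [], h, by simp⟩
      · exact ⟨u, hu, a :: v, hv, rfl⟩
  rw [e]
  refine pol_union ?_ (pol_biUnion hba _ (toFinite _) _
    fun a => pol_mcat a hK (pol_lq hba hqc hL a))
  by_cases hc : [] ∈ L
  · simpa [hc] using hK
  · have : {w | [] ∈ L ∧ w ∈ K} = ∅ := by
      ext w; simp only [mem_ofPred_eq, hc, false_and]; rfl
    rw [this]
    exact pol_base hba.1.1

theorem cclass_mem {𝒞 : LClass A} (hfin : 𝒞.Finite) (hba : LangBoolAlg 𝒞) (w : List A) :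
    cclass 𝒞 w ∈ 𝒞 := by
  have : ∀ D : LClass A, D.Finite → D ⊆ 𝒞 → {v | ∀ L ∈ D, (w ∈ L ↔ v ∈ L)} ∈ 𝒞 := by
    intro D hD
    induction D, hD using Set.Finite.induction_on with
    | empty => intro _; simpa using hba.1.2.1
    | @insert L D _ _ ih =>
      intro hs
      have hL : L ∈ 𝒞 := hs (mem_insert _ _)
      have e : {v | ∀ L' ∈ insert L D, (w ∈ L' ↔ v ∈ L')} =
          {v | (w ∈ L ↔ v ∈ L)} ∩ {v | ∀ L' ∈ D, (w ∈ L' ↔ v ∈ L')} := by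
        ext v; simp
      rw [e]
      refine hba.1.2.2.2 _ _ ?_ (ih fun x hx => hs (mem_insert_of_mem _ hx))
      by_cases hw : w ∈ L
      · simpa [hw] using hL
      · have e2 : {v | (w ∈ L ↔ v ∈ L)} = Lᶜ := by
          ext v; simp [hw]
        rw [e2]
        exact hba.2 L hL
  exact this 𝒞 hfin subset_rfl

theorem exists_idem_pow {N : Type} [Monoid N] [Finite N] (x : N) :
    ∃ n : ℕ, x ^ (n + 1) * x ^ (n + 1) = x ^ (n + 1) := by
  obtain ⟨i, j, hne, h⟩ := Finite.exists_ne_map_eq_of_infinite (fun n : ℕ => x ^ n)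
  wlog hij : i < j generalizing i j
  · exact this j i hne.symm h.symm (by omega)
  obtain ⟨p, rfl⟩ := Nat.exists_eq_add_of_lt hij
  have h1 : ∀ m, x ^ (i + m * (p + 1)) = x ^ i := by
    intro m
    induction m with
    | zero => simp
    | succ m ih =>
      rw [Nat.succ_mul, ← add_assoc, pow_add, ih, ← pow_add, ← add_assoc, ← h]
  have h2 : ∀ c m, x ^ (i + c + m * (p + 1)) = x ^ (i + c) := by
    intro c m
    rw [show i + c + m * (p + 1) = (i + m * (p + 1)) + c by ring, pow_add, h1, ← pow_add]
  refine ⟨i * (p + 1) + p, ?_⟩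
  have := h2 (i * p + p + 1) (i + 1)
  rw [← pow_add]
  convert this using 2 <;> ring

/-- has a factor satisfying P -/
def HasBlk {B : Type} (P : List B → Prop) (l : List B) : Prop := ∃ u b v, l = u ++ b ++ v ∧ P b

theorem HasBlk.first {B : Type} {P : List B → Prop} (hP : ∀ b, P b → b ≠ []) {l : List B}
    (h : HasBlk P l) : ∃ u b v, l = u ++ b ++ v ∧ P b ∧ ¬ HasBlk P u := by
  obtain ⟨u, b, v, rfl, hb⟩ := h
  induction hn : u.length using Nat.strong_induction_on generalizing u b v with
  | _ n ih =>
    by_cases hu : HasBlk P u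
    · obtain ⟨u1, b1, v1, rfl, hb1⟩ := hu
      have := List.length_pos_iff.2 (hP b1 hb1)
      simp at hn
      obtain ⟨x, y, z, e, h⟩ := ih u1.length (by omega) u1 b1 (v1 ++ b ++ v) hb1 rfl
      exact ⟨x, y, z, by rw [← e]; simp, h⟩
    · exact ⟨u, b, v, rfl, hb, hu⟩

theorem HasBlk.last {B : Type} {P : List B → Prop} (hP : ∀ b, P b → b ≠ []) {l : List B}
    (h : HasBlk P l) : ∃ u b v, l = u ++ b ++ v ∧ P b ∧ ¬ HasBlk P v := by
  obtain ⟨u, b, v, rfl, hb⟩ := h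
  induction hn : v.length using Nat.strong_induction_on generalizing u b v with
  | _ n ih =>
    by_cases hu : HasBlk P v
    · obtain ⟨u1, b1, v1, rfl, hb1⟩ := hu
      have := List.length_pos_iff.2 (hP b1 hb1)
      simp at hn
      obtain ⟨x, y, z, e, h⟩ := ih v1.length (by omega) (u ++ b ++ u1) b1 v1 hb1 rfl
      exact ⟨x, y, z, by rw [← e]; simp, h⟩
    · exact ⟨u, b, v, rfl, hb, hu⟩

def PG [Semiring R] (𝒞 : LClass A) (ρ : Lang A → R) (γ : R → R) (S : Set (M × R))
    (t : M × R × Lang A) : Prop :=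
  t.2.2 ∈ PolC 𝒞 ∧ (t.1, t.2.1) ∈ S ∧ rle (ρ t.2.2) (γ t.2.1)

def Good [Semiring R] (𝒞 : LClass A) (α : List A → M) (ρ : Lang A → R) (γ : R → R)
    (S : Set (M × R)) (X : Lang A) : Prop :=
  ∃ F : Set (M × R × Lang A), F.Finite ∧ (∀ t ∈ F, PG 𝒞 ρ γ S t) ∧
    ∀ w ∈ X, ∃ r K, (α w, r, K) ∈ F ∧ w ∈ K

def den (X : Lang A) : List (R × Lang A) → Lang A
  | [] => {[]}
  | p :: l => cat (p.2 ∩ X) (den X l)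

theorem cat_mono {K K' L L' : Lang A} (h : K ⊆ K') (h' : L ⊆ L') : cat K L ⊆ cat K' L' := by
  rintro _ ⟨u, hu, v, hv, rfl⟩
  exact ⟨u, h hu, v, h' hv, rfl⟩

theorem den_mono {X Y : Lang A} (h : X ⊆ Y) (l : List (R × Lang A)) : den X l ⊆ den Y l := by
  induction l with
  | nil => exact subset_rfl
  | cons p l ih => exact cat_mono (inter_subset_inter subset_rfl h) ih

theorem den_append (X : Lang A) (l l' : List (R × Lang A)) {w : List A} :
    w ∈ den X (l ++ l') ↔ ∃ u ∈ den X l, ∃ v ∈ den X l', u ++ v = w := by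
  induction l generalizing w with
  | nil => simp [den]
  | cons p l ih =>
    constructor
    · rintro ⟨u, hu, v, hv, rfl⟩
      obtain ⟨x, hx, y, hy, rfl⟩ := ih.1 hv
      exact ⟨u ++ x, ⟨u, hu, x, hx, rfl⟩, y, hy, by simp⟩
    · rintro ⟨_, ⟨u, hu, x, hx, rfl⟩, y, hy, rfl⟩
      exact ⟨u, hu, x ++ y, ih.2 ⟨x, hx, y, hy, rfl⟩, by simp⟩

section Complete
variable [Finite A] [Semiring R] [Finite R] [Monoid M]
    {𝒞 : LClass A} {α : List A → M} {cls : M → Lang A} {ρ : Lang A → R} {γ : R → R}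
    {S : Set (M × R)}

theorem good_mono (X Y : Lang A) (h : X ⊆ Y) (hY : Good 𝒞 α ρ γ S Y) : Good 𝒞 α ρ γ S X := by
  obtain ⟨F, h1, h2, h3⟩ := hY
  exact ⟨F, h1, h2, fun w hw => h3 w (h hw)⟩

theorem good_union (X Y : Lang A) (hX : Good 𝒞 α ρ γ S X) (hY : Good 𝒞 α ρ γ S Y) :
    Good 𝒞 α ρ γ S (X ∪ Y) := by
  obtain ⟨F, h1, h2, h3⟩ := hX
  obtain ⟨F', h1', h2', h3'⟩ := hY
  refine ⟨F ∪ F', h1.union h1', ?_, ?_⟩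
  · rintro t (ht | ht)
    · exact h2 t ht
    · exact h2' t ht
  · rintro w (hw | hw)
    · obtain ⟨r, K, h, h'⟩ := h3 w hw
      exact ⟨r, K, Or.inl h, h'⟩
    · obtain ⟨r, K, h, h'⟩ := h3' w hw
      exact ⟨r, K, Or.inr h, h'⟩

theorem good_cat (hidem : ∀ r : R, r + r = r) (hba : LangBoolAlg 𝒞) (hqc : QuotientClosed 𝒞)
    (hα : IsMonoidMorphism α) (hγ : IsQuasiMult ρ γ) (hS : PolSaturated α cls ρ S)
    (X Y : Lang A) (hX : Good 𝒞 α ρ γ S X) (hY : Good 𝒞 α ρ γ S Y) :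
    Good 𝒞 α ρ γ S (cat X Y) := by
  obtain ⟨F, h1, h2, h3⟩ := hX
  obtain ⟨F', h1', h2', h3'⟩ := hY
  refine ⟨image2 (fun t t' => (t.1 * t'.1, t.2.1 * t'.2.1, cat t.2.2 t'.2.2)) F F',
    h1.image2 _ h1', ?_, ?_⟩
  · rintro _ ⟨t, ht, t', ht', rfl⟩
    have a := h2 t ht
    have b := h2' t' ht'
    exact ⟨pol_cat hba hqc a.1 b.1, hS.2.2.1 _ _ _ _ a.2.1 b.2.1, val_cat hidem hγ a.2.2 b.2.2⟩
  · rintro _ ⟨u, hu, v, hv, rfl⟩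
    obtain ⟨r, K, h, h'⟩ := h3 u hu
    obtain ⟨r2, K2, h4, h5⟩ := h3' v hv
    refine ⟨r * r2, cat K K2, ⟨_, h, _, h4, ?_⟩, u, h', v, h5, rfl⟩
    simp [hα.2]

theorem cls_pol (hfin : 𝒞.Finite) (hba : LangBoolAlg 𝒞)
    (hcls : ∀ s : M, IsCClass 𝒞 (cls s) ∧ α ⁻¹' {s} ⊆ cls s) (e : M) : cls e ∈ PolC 𝒞 := by
  obtain ⟨w, hw⟩ := (hcls e).1
  rw [hw]
  exact pol_base (cclass_mem hfin hba w)

theorem cls_one (hidem : ∀ r : R, r + r = r)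
    (hα : IsMonoidMorphism α) (hγ : IsQuasiMult ρ γ) (hS : PolSaturated α cls ρ S) :
    ∃ r, ((1 : M), r) ∈ S ∧ rle (ρ (cls 1)) (γ r) := by
  have h0 : ((1 : M), ρ {[]}) ∈ S := by
    have := hS.1 []
    rwa [hα.1] at this
  have hp : ∀ n : ℕ, ((1 : M), ρ {[]} ^ (n + 1)) ∈ S ∧ γ (ρ {[]} ^ (n + 1)) = ρ {[]} := by
    intro n
    induction n with
    | zero => simpa using ⟨h0, gam_rho hγ _⟩
    | succ n ih =>
      refine ⟨?_, ?_⟩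
      · have := hS.2.2.1 _ _ _ _ ih.1 h0
        rwa [one_mul, ← pow_succ] at this
      · rw [pow_succ, ← gam_l hγ, ih.2, ← hγ.2.2]
        congr 1
        ext w
        simp [cat, eq_comm]
  obtain ⟨n, hn⟩ := exists_idem_pow (ρ {[]})
  refine ⟨_, hS.2.2.2 1 _ (hp n).1 (one_mul 1) hn, ?_⟩
  have h1 := (rle_rfl hidem (ρ {[]}))
  rw [← (hp n).2] at h1
  conv at h1 => arg 1; rw [(hp n).2]
  have h2 := (rle_rfl hidem (ρ (cls 1)))
  conv at h2 => arg 2; rw [← gam_rho hγ]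
  have h3 := val_cat hidem hγ (val_cat hidem hγ h1 h2) h1
  have e : cat (cat {[]} (cls 1)) {[]} = cls 1 := by
    ext w; simp [cat]
  rwa [e] at h3

theorem good_nil (hidem : ∀ r : R, r + r = r) (hfin : 𝒞.Finite) (hba : LangBoolAlg 𝒞)
    (hcls : ∀ s : M, IsCClass 𝒞 (cls s) ∧ α ⁻¹' {s} ⊆ cls s)
    (hα : IsMonoidMorphism α) (hγ : IsQuasiMult ρ γ) (hS : PolSaturated α cls ρ S) :
    Good 𝒞 α ρ γ S {[]} := by
  obtain ⟨r, h1, h2⟩ := cls_one hidem hα hγ hS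
  refine ⟨{(1, r, cls 1)}, finite_singleton _, ?_, ?_⟩
  · rintro _ rfl
    exact ⟨cls_pol hfin hba hcls 1, h1, h2⟩
  · rintro _ rfl
    exact ⟨r, cls 1, by rw [hα.1]; rfl, (hcls 1).2 hα.1⟩

theorem good_letter (hidem : ∀ r : R, r + r = r) (hfin : 𝒞.Finite) (hba : LangBoolAlg 𝒞)
    (hcls : ∀ s : M, IsCClass 𝒞 (cls s) ∧ α ⁻¹' {s} ⊆ cls s)
    (hα : IsMonoidMorphism α) (hγ : IsQuasiMult ρ γ) (hS : PolSaturated α cls ρ S) (a : A) :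
    Good 𝒞 α ρ γ S {[a]} := by
  obtain ⟨r, h1, h2⟩ := cls_one hidem hα hγ hS
  refine ⟨{(α [a], r * ρ {[a]} * r, mcat (cls 1) a (cls 1))}, finite_singleton _, ?_, ?_⟩
  · rintro _ rfl
    have hc := cls_pol hfin hba hcls 1
    refine ⟨pol_mcat a hc hc, ?_, ?_⟩
    · have := hS.2.2.1 _ _ _ _ (hS.2.2.1 _ _ _ _ h1 (hS.1 [a])) h1
      simpa using this
    · have h3 := (rle_rfl hidem (ρ {[a]}))
      conv at h3 => arg 2; rw [← gam_rho hγ]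
      have h4 := val_cat hidem hγ (val_cat hidem hγ h2 h3) h2
      have e : cat (cat (cls 1) {[a]}) (cls 1) = mcat (cls 1) a (cls 1) := by
        ext w; simp [cat, mcat]
      rwa [e] at h4
  · rintro _ rfl
    have hn : [] ∈ cls 1 := (hcls 1).2 hα.1
    exact ⟨_, _, rfl, [], hn, [], hn, rfl⟩

theorem good_star (hidem : ∀ r : R, r + r = r) (hfin : 𝒞.Finite) (hba : LangBoolAlg 𝒞)
    (hqc : QuotientClosed 𝒞)
    (hcls : ∀ s : M, IsCClass 𝒞 (cls s) ∧ α ⁻¹' {s} ⊆ cls s)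
    (hα : IsMonoidMorphism α) (hγ : IsQuasiMult ρ γ) (hS : PolSaturated α cls ρ S)
    (e : M) (X : Lang A) (he : e * e = e) (hX : Good 𝒞 α ρ γ S X) (hXe : ∀ w ∈ X, α w = e) :
    Good 𝒞 α ρ γ S (StarL X) := by
  have hnil : Good 𝒞 α ρ γ S {[]} := good_nil hidem hfin hba hcls hα hγ hS
  have hcat := good_cat (cls := cls) hidem hba hqc hα hγ hS
  obtain ⟨F, hF, hPG, hcov⟩ := id hX
  set G : Set (R × Lang A) := {p | (e, p.1, p.2) ∈ F} with hG
  have hGfin : G.Finite := by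
    refine (hF.image Prod.snd).subset ?_
    rintro p hp
    exact ⟨_, hp, rfl⟩
  let φ : List (R × Lang A) → R := fun l => (l.map Prod.fst).prod
  have hφ : IsMonoidMorphism φ := ⟨by simp [φ], by simp [φ]⟩
  obtain ⟨n, hn⟩ := exists_fac φ hφ
  -- short words
  have hshort : ∀ m : ℕ, Good 𝒞 α ρ γ S {w | ∃ l : List (R × Lang A), l.length ≤ m ∧ w ∈ den X l} := by
    intro m
    induction m with
    | zero =>
      refine good_mono _ _ ?_ hnil
      rintro w ⟨l, hl, hw⟩
      obtain rfl : l = [] := by simpa using hl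
      exact hw
    | succ m ih =>
      refine good_mono _ _ ?_ (good_union _ _ hnil (hcat _ _ hX ih))
      rintro w ⟨l, hl, hw⟩
      cases l with
      | nil => exact Or.inl hw
      | cons p l =>
        obtain ⟨u, hu, v, hv, rfl⟩ := hw
        exact Or.inr ⟨u, hu.2, v, ⟨l, by simpa using hl, hv⟩, rfl⟩
  have hdenα : ∀ (l : List (R × Lang A)) w, w ∈ den X l → l = [] ∨ α w = e := by
    intro l
    induction l with
    | nil => exact fun _ _ => Or.inl rfl
    | cons p l ih =>
      rintro _ ⟨u, hu, v, hv, rfl⟩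
      right
      rw [hα.2, hXe u hu.2]
      rcases ih v hv with rfl | h
      · have : v = [] := hv
        rw [this, hα.1, mul_one]
      · rw [h, he]
  have hblk : ∀ (l : List (R × Lang A)), (∀ p ∈ l, p ∈ G) → l ≠ [] →
      PG 𝒞 ρ γ S (e, φ l, den univ l) := by
    intro l
    induction l with
    | nil => exact fun _ h => absurd rfl h
    | cons p l ih =>
      intro hl _
      have hp := hPG _ (show (e, p.1, p.2) ∈ F from hl p (by simp))
      by_cases h : l = []
      · subst h
        have e1 : den univ [p] = p.2 := by ext w; simp [den, cat]
        have e2 : φ [p] = p.1 := by simp [φ]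
        rw [e1, e2]
        exact hp
      · have ih' := ih (fun q hq => hl q (by simp [hq])) h
        have e1 : den univ (p :: l) = cat p.2 (den univ l) := by simp [den]
        have e2 : φ (p :: l) = p.1 * φ l := by simp [φ]
        rw [e1, e2]
        refine ⟨pol_cat hba hqc hp.1 ih'.1, ?_, val_cat hidem hγ hp.2.2 ih'.2.2⟩
        have := hS.2.2.1 _ _ _ _ hp.2.1 ih'.2.1
        rwa [he] at this
  let Blk : R → List (R × Lang A) → Prop := fun f b => b ≠ [] ∧ b.length ≤ n ∧ φ b = f
  have hlong : ∀ f : R, f * f = f → Good 𝒞 α ρ γ S {w | ∃ b b' : List (R × Lang A),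
      (∀ p ∈ b, p ∈ G) ∧ (∀ p ∈ b', p ∈ G) ∧ Blk f b ∧ Blk f b' ∧
      ∃ x ∈ den X b, ∃ y, α y = e ∧ ∃ z ∈ den X b', x ++ y ++ z = w} := by
    intro f hf
    set T : Set (List (R × Lang A)) := {b | (∀ p ∈ b, p ∈ G) ∧ Blk f b} with hT
    have hTfin : T.Finite := by
      have : Finite G := hGfin
      refine ((List.finite_length_le G n).image (List.map Subtype.val)).subset ?_
      rintro b ⟨hb, hb2⟩
      lift b to List G using hb
      exact ⟨b, by simpa using hb2.2.1, rfl⟩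
    refine ⟨image2 (fun b b' => (e, f * ρ (cls e) * f, cat (cat (den univ b) (cls e)) (den univ b')))
      T T, hTfin.image2 _ hTfin, ?_, ?_⟩
    · rintro _ ⟨b, ⟨hb, hb1⟩, b', ⟨hb', hb1'⟩, rfl⟩
      have g := hblk b hb hb1.1
      have g' := hblk b' hb' hb1'.1
      rw [hb1.2.2] at g
      rw [hb1'.2.2] at g'
      have h3 := (rle_rfl hidem (ρ (cls e)))
      conv at h3 => arg 2; rw [← gam_rho hγ]
      exact ⟨pol_cat hba hqc (pol_cat hba hqc g.1 (cls_pol hfin hba hcls e)) g'.1,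
        hS.2.2.2 e f g.2.1 he hf, val_cat hidem hγ (val_cat hidem hγ g.2.2 h3) g'.2.2⟩
    · rintro _ ⟨b, b', hb, hb', hb1, hb1', x, hx, y, hy, z, hz, rfl⟩
      refine ⟨f * ρ (cls e) * f, cat (cat (den univ b) (cls e)) (den univ b'),
        ⟨b, ⟨hb, hb1⟩, b', ⟨hb', hb1'⟩, ?_⟩, x ++ y, ⟨x, den_mono (subset_univ _) _ hx, y,
          (hcls e).2 hy, rfl⟩, z, den_mono (subset_univ _) _ hz, rfl⟩
      rw [hα.2, hα.2, hy, (hdenα b x hx).resolve_left hb1.1, (hdenα b' z hz).resolve_left hb1'.1,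
        he, he]
  have hW : ∀ Φ : Set R, (∀ f ∈ Φ, f * f = f) → Good 𝒞 α ρ γ S {w | ∃ l : List (R × Lang A),
      (∀ p ∈ l, p ∈ G) ∧ w ∈ den X l ∧ ∀ f, f * f = f → HasBlk (Blk f) l → f ∈ Φ} := by
    intro Φ
    induction Φ, Φ.toFinite using Set.Finite.induction_on with
    | empty =>
      intro _
      refine good_mono _ _ ?_ (hshort n)
      rintro w ⟨l, hl, hw, hb⟩
      refine ⟨l, ?_, hw⟩
      by_contra hlen
      obtain ⟨u, b, v, h1, h2, h3, h4⟩ := hn l (by omega)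
      exact hb (φ b) h4 ⟨u, b, v, h1, h2, h3, rfl⟩
    | @insert f Φ _ _ ih =>
      intro hΦ
      have ih' := ih fun i hi => hΦ i (mem_insert_of_mem _ hi)
      have hf := hΦ f (mem_insert _ _)
      have hmid := good_union _ _ (good_union _ _ (hshort n) (hcat _ _ (hshort n) (hshort n)))
        (hlong f hf)
      refine good_mono _ _ ?_ (good_union _ _ ih' (hcat _ _ ih' (hcat _ _ hmid ih')))
      rintro w ⟨l, hl, hw, hb⟩
      have hne : ∀ b, Blk f b → b ≠ [] := fun b h => h.1
      by_cases hlf : HasBlk (Blk f) l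
      swap
      · left
        refine ⟨l, hl, hw, fun g hg hgl => ?_⟩
        rcases hb g hg hgl with rfl | h
        · exact absurd hgl hlf
        · exact h
      right
      obtain ⟨u, b, v, rfl, hbb, hu⟩ := hlf.first hne
      have hu' : ∀ g, g * g = g → HasBlk (Blk g) u → g ∈ Φ := by
        intro g hg hgu
        rcases hb g hg (by
          obtain ⟨x, y, z, rfl, hy⟩ := hgu
          exact ⟨x, y, z ++ b ++ v, by simp, hy⟩) with rfl | h
        · exact absurd hgu hu
        · exact h
      obtain ⟨w12, hw12, w3, hw3, rfl⟩ := (den_append X _ _).1 hw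
      obtain ⟨w1, hw1, w2, hw2, rfl⟩ := (den_append X _ _).1 hw12
      have hlu : ∀ p ∈ u, p ∈ G := fun p hp => hl p (by simp [hp])
      have hlb : ∀ p ∈ b, p ∈ G := fun p hp => hl p (by simp [hp])
      have hlv : ∀ p ∈ v, p ∈ G := fun p hp => hl p (by simp [hp])
      by_cases hv : HasBlk (Blk f) v
      swap
      · refine ⟨w1, ⟨u, hlu, hw1, hu'⟩, w2 ++ w3, ⟨w2, Or.inl (Or.inl ⟨b, hbb.2.1, hw2⟩), w3,
          ⟨v, hlv, hw3, ?_⟩, rfl⟩, by simp⟩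
        intro g hg hgv
        rcases hb g hg (by
          obtain ⟨x, y, z, rfl, hy⟩ := hgv
          exact ⟨u ++ b ++ x, y, z, by simp, hy⟩) with rfl | h
        · exact absurd hgv hv
        · exact h
      obtain ⟨c, b', d, rfl, hbb', hd⟩ := hv.last hne
      have hd' : ∀ g, g * g = g → HasBlk (Blk g) d → g ∈ Φ := by
        intro g hg hgv
        rcases hb g hg (by
          obtain ⟨x, y, z, rfl, hy⟩ := hgv
          exact ⟨u ++ b ++ (c ++ b' ++ x), y, z, by simp, hy⟩) with rfl | h
        · exact absurd hgv hd
        · exact h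
      obtain ⟨v12, hv12, v3, hv3, rfl⟩ := (den_append X _ _).1 hw3
      obtain ⟨v1, hv1, v2, hv2, rfl⟩ := (den_append X _ _).1 hv12
      have hlb' : ∀ p ∈ b', p ∈ G := fun p hp => hlv p (by simp [hp])
      have hld : ∀ p ∈ d, p ∈ G := fun p hp => hlv p (by simp [hp])
      refine ⟨w1, ⟨u, hlu, hw1, hu'⟩, (w2 ++ v1 ++ v2) ++ v3, ⟨w2 ++ v1 ++ v2, ?_, v3,
          ⟨d, hld, hv3, hd'⟩, rfl⟩, by simp⟩
      rcases hdenα c v1 hv1 with rfl | hc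
      · have : v1 = [] := hv1
        subst this
        exact Or.inl (Or.inr ⟨w2, ⟨b, hbb.2.1, hw2⟩, v2, ⟨b', hbb'.2.1, hv2⟩, by simp⟩)
      · exact Or.inr ⟨b, b', hlb, hlb', hbb, hbb', w2, hw2, v1, hc, v2, hv2, rfl⟩
  refine good_mono _ _ ?_ (hW {f | f * f = f} fun f hf => hf)
  have : ∀ w, Star X w → ∃ l : List (R × Lang A), (∀ p ∈ l, p ∈ G) ∧ w ∈ den X l := by
    intro w hw
    induction hw with
    | nil => exact ⟨[], by simp, rfl⟩
    | @snoc w x _ hx ih =>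
      obtain ⟨l, hl, hw⟩ := ih
      obtain ⟨r, K, h1, h2⟩ := hcov x hx
      rw [hXe x hx] at h1
      refine ⟨l ++ [(r, K)], ?_, (den_append X _ _).2 ⟨w, hw, x, ⟨x, ⟨h2, hx⟩, [], rfl, by simp⟩, rfl⟩⟩
      intro p hp
      simp at hp
      rcases hp with hp | rfl
      · exact hl p hp
      · exact h1
  intro w hw
  obtain ⟨l, hl, hw⟩ := this w hw
  exact ⟨l, hl, hw, fun f hf _ => hf⟩

end Complete

/-- Characterization of the `α`-pointed `Pol(𝒞)`-optimal
`ρ`-imprint via the least `Pol(𝒞)`-saturated set. -/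
theorem statement16 {A R M : Type} [Fintype A] [Semiring R] [Finite R]
    [Monoid M] [Finite M] (hidem : ∀ r : R, r + r = r)
    (𝒞 : LClass A) (hfin : 𝒞.Finite) (hba : LangBoolAlg 𝒞)
    (hqc : QuotientClosed 𝒞)
    (α : List A → M) (hα : IsMonoidMorphism α)
    (cls : M → Lang A)
    (hcls : ∀ s : M, IsCClass 𝒞 (cls s) ∧ α ⁻¹' {s} ⊆ cls s)
    (ρ : Lang A → R) (hρ : IsRatingMap ρ) (γ : R → R) (hγ : IsQuasiMult ρ γ)
    (S : Set (M × R)) (hS : PolSaturated α cls ρ S)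
    (hleast : ∀ S' : Set (M × R), PolSaturated α cls ρ S' → S ⊆ S') :
    {p : M × R | p.2 ∈ optImprint (PolC 𝒞) ρ (α ⁻¹' {p.1})} =
      {p : M × R | ∃ r : R, (p.1, r) ∈ S ∧ rle p.2 (γ r)} := by
  ext ⟨s, q⟩
  simp only [mem_ofPred_eq]
  constructor
  · intro hq
    have hnil : Good 𝒞 α ρ γ S {[]} := good_nil hidem hfin hba hcls hα hγ hS
    have hlet : Good 𝒞 α ρ γ S {w | ∃ a ∈ (univ : Set A), w ∈ ({[a]} : Lang A)} :=
      G_biUnion (good_mono) (good_union) hnil _ (toFinite _) _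
        (fun a _ => good_letter hidem hfin hba hcls hα hγ hS a)
    have hall := simon α hα (Good 𝒞 α ρ γ S) good_mono good_union
      (good_cat (cls := cls) hidem hba hqc hα hγ hS) hnil
      (good_star hidem hfin hba hqc hcls hα hγ hS) ⊤ _ (fun _ _ => Submonoid.mem_top _) hlet
    obtain ⟨F, hF, hPG, hcov⟩ := hall
    have hcc : IsCCover (PolC 𝒞) {K | ∃ r, (s, r, K) ∈ F} (α ⁻¹' {s}) →
        ∃ r, (s, r) ∈ S ∧ rle q (γ r) := by
      intro hcc
      obtain ⟨K, ⟨r, hK⟩, hle⟩ := hq _ hcc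
      exact ⟨r, (hPG _ hK).2.1, rle_trans hle (hPG _ hK).2.2⟩
    refine hcc ⟨⟨?_, ?_⟩, ?_⟩
    · refine (hF.image fun t => t.2.2).subset ?_
      rintro K ⟨r, hK⟩
      exact ⟨_, hK, rfl⟩
    · intro w hw
      have hw' : α w = s := hw
      have hst : ∀ w : List A,
          w ∈ StarL {w | ∃ a ∈ (univ : Set A), w ∈ ({[a]} : Lang A)} := by
        intro w
        induction w using List.reverseRecOn with
        | nil => exact .nil
        | append_singleton w a ih => exact .snoc ih ⟨a, mem_univ _, rfl⟩
      obtain ⟨r, K, h1, h2⟩ := hcov w (hst w)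
      rw [hw'] at h1
      exact ⟨K, ⟨r, h1⟩, h2⟩
    · rintro K ⟨r, hK⟩
      exact (hPG _ hK).1
  · rintro ⟨r, hr, hle⟩ Ks ⟨⟨hfinK, hcov⟩, hsub⟩
    have hk : ∃ k, ∀ K ∈ Ks, ∀ w ∈ K, ∀ w', ple 𝒞 k w w' → w' ∈ K := by
      clear hcov
      induction Ks, hfinK using Set.Finite.induction_on with
      | empty => exact ⟨0, fun K hK => hK.elim⟩
      | @insert K Ks _ _ ih =>
        obtain ⟨k, hk⟩ := ih fun x hx => hsub (mem_insert_of_mem _ hx)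
        obtain ⟨l, hl⟩ := pol_up (hsub (mem_insert K Ks))
        refine ⟨max k l, ?_⟩
        rintro K' (rfl | hK') w hw w' h
        · exact hl w hw w' (ple_mono (le_max_right _ _) h)
        · exact hk K' hK' w hw w' (ple_mono (le_max_left _ _) h)
    obtain ⟨k, hk⟩ := hk
    obtain ⟨w, hw, hrw⟩ := hleast _ (sound hidem 𝒞 hqc α hα cls hcls ρ hρ γ hγ k) hr
    obtain ⟨K, hK, hwK⟩ := hcov (show w ∈ α ⁻¹' {s} from hw)
    exact ⟨K, hK, rle_trans hle (rle_trans hrw (rho_mono hρ fun w' h => hk K hK w hwK w' h))⟩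

end Paper
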